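/- Let f_1, …, f_n : ℝ^d → ℝ be differentiable, let f = (1/n)·Σ_{i=1}^n f_i, let p ≥ 1, fix points y, ȳ, x⋆ ∈ ℝ^d and a batch size b ≥ 1, let j_1, …, j_b be i.i.d. uniform random indices in {1, …, n}, and let I ∈ {0,1} be an independent Bernoulli random variable with P(I = 1) = 1/p. Define the SVRG estimator ∇̂f(y) = ∇f(y) if I = 1, and ∇̂f(y) = (1/b)·Σ_{l=1}^{b} (∇f_{j_l}(y) − ∇f_{j_l}(ȳ)) + ∇f(ȳ) if I = 0. Then E[∇̂f(y)] = ∇f(y), and E‖∇̂f(y) − ∇f(y)‖² ≤ (2(1 − 1/p)/(b·n))·[Σ_{i=1}^{n} ‖∇f_i(y) − ∇f_i(x⋆)‖² + Σ_{i=1}^{n} ‖∇f_i(ȳ) − ∇f_i(x⋆)‖²]. -/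

import Mathlib

open Finset

/-!
Since `(1 / n) ∑ i, (∇fᵢ(y) - ∇fᵢ(ȳ)) = ∇f(y) - ∇f(ȳ)`, the error of the estimator on a draw without
refresh is the mean of `b` independent centred copies of `∇fᵢ(y) - ∇fᵢ(ȳ)`. The cross terms in its
squared norm average to zero, so its variance is `1 / b` times that of a single copy, which is at
most the second moment of `∇fᵢ(y) - ∇fᵢ(ȳ)`. Passing through `∇fᵢ(x⋆)` bounds this by twice the sum
of two second moments. A refresh makes no error, whence the factor `1 - 1 / p`.
-/

open scoped BigOperators

lemma expect_eq_inv_card_smul_sum (K : Type*) {ι M : Type*} [DivisionRing K] [CharZero K]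
    [Fintype ι] [AddCommMonoid M] [Module K M] [Module ℚ≥0 M] (x : ι → M) :
    𝔼 i, x i = (Fintype.card ι : K)⁻¹ • ∑ i, x i := by
  rw [expect_univ, ← NNRat.cast_smul_eq_nnqsmul K, NNRat.cast_inv, NNRat.cast_natCast]

section UniformSampling

variable {ι κ M : Type*} [Fintype ι] [Nonempty ι] [Fintype κ] [DecidableEq κ]
  [AddCommMonoid M] [Module ℚ≥0 M]

lemma expect_expect_update {α : κ → Type*} [∀ k, Fintype (α k)] (k : κ) [Nonempty (α k)]
    (F : (∀ k, α k) → M) : 𝔼 σ, 𝔼 a, F (Function.update σ k a) = 𝔼 σ, F σ := by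
  let swap : (∀ k, α k) × α k → (∀ k, α k) × α k := fun x ↦ (Function.update x.1 k x.2, x.1 k)
  have swap_swap : Function.Involutive swap := fun x ↦ by simp [swap]
  calc 𝔼 σ, 𝔼 a, F (Function.update σ k a)
      = 𝔼 x, F (swap x).1 := (expect_product' univ univ fun σ a ↦ F (Function.update σ k a)).symm
    _ = 𝔼 x : (∀ k, α k) × α k, F x.1 :=
        Fintype.expect_bijective swap swap_swap.bijective _ _ fun _ ↦ rfl
    _ = 𝔼 σ, 𝔼 _a : α k, F σ := expect_product' univ univ fun σ _ ↦ F σ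
    _ = 𝔼 σ, F σ := by simp only [Fintype.expect_const]

lemma expect_comp_eval {α : κ → Type*} [∀ k, Fintype (α k)] [∀ k, Nonempty (α k)] (k : κ)
    (x : α k → M) : 𝔼 σ : ∀ k, α k, x (σ k) = 𝔼 a, x a := by
  rw [← expect_expect_update k]
  simp only [Function.update_self, Fintype.expect_const]

lemma expect_expect_apply [Nonempty κ] (x : ι → M) :
    𝔼 σ : κ → ι, 𝔼 k, x (σ k) = 𝔼 i, x i := by
  rw [expect_comm]
  simp only [expect_comp_eval, Fintype.expect_const]

end UniformSampling

lemma norm_sub_sq_le_two_mul {E : Type*} [SeminormedAddGroup E] (u v w : E) :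
    ‖u - v‖ ^ 2 ≤ 2 * (‖u - w‖ ^ 2 + ‖v - w‖ ^ 2) :=
  calc ‖u - v‖ ^ 2 ≤ (‖u - w‖ + ‖w - v‖) ^ 2 := by
        gcongr
        exact norm_sub_le_norm_sub_add_norm_sub u w v
    _ ≤ 2 * (‖u - w‖ ^ 2 + ‖w - v‖ ^ 2) := add_sq_le
    _ = 2 * (‖u - w‖ ^ 2 + ‖v - w‖ ^ 2) := by rw [norm_sub_rev w v]

section Variance

variable {ι κ E : Type*} [Fintype ι] [Fintype κ] [SeminormedAddCommGroup E]
  [InnerProductSpace ℝ E] [Module ℚ≥0 E]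

lemma inner_expect (c : E) (x : ι → E) : inner ℝ c (𝔼 i, x i) = 𝔼 i, inner ℝ c (x i) :=
  map_expect ((innerₛₗ ℝ c).restrictScalars ℚ≥0) x univ

lemma expect_inner (x : ι → E) (c : E) : inner ℝ (𝔼 i, x i) c = 𝔼 i, inner ℝ (x i) c := by
  simp only [real_inner_comm c, inner_expect]

lemma norm_expect_sq (x : ι → E) : ‖𝔼 i, x i‖ ^ 2 = 𝔼 i, 𝔼 j, inner ℝ (x i) (x j) := by
  rw [← real_inner_self_eq_norm_sq, expect_inner]
  simp only [inner_expect]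

lemma expect_norm_sq_balance [Nonempty ι] (x : ι → E) :
    𝔼 i, ‖Fintype.balance x i‖ ^ 2 = 𝔼 i, ‖x i‖ ^ 2 - ‖𝔼 i, x i‖ ^ 2 := by
  simp only [Fintype.balance_apply, norm_sub_sq_real, expect_add_distrib, expect_sub_distrib,
    ← mul_expect, ← expect_inner, real_inner_self_eq_norm_sq, Fintype.expect_const]
  ring

variable [Nonempty ι] [DecidableEq κ]

lemma expect_inner_apply_of_ne {j k : κ} (hjk : j ≠ k) (x : ι → E) {z : ι → E}
    (hz : 𝔼 i, z i = 0) : 𝔼 σ : κ → ι, inner ℝ (x (σ j)) (z (σ k)) = 0 := by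
  rw [← expect_expect_update k]
  simp only [Function.update_self, Function.update_of_ne hjk, ← inner_expect, hz,
    inner_zero_right, expect_const_zero]

lemma expect_norm_sq_expect_apply [Nonempty κ] {z : ι → E} (hz : 𝔼 i, z i = 0) :
    𝔼 σ : κ → ι, ‖𝔼 k, z (σ k)‖ ^ 2 = (𝔼 i, ‖z i‖ ^ 2) / Fintype.card κ := by
  have cross (j k : κ) : 𝔼 σ : κ → ι, inner ℝ (z (σ j)) (z (σ k)) =
      if j = k then 𝔼 i, ‖z i‖ ^ 2 else 0 := by
    split_ifs with hjk
    · simp only [hjk, real_inner_self_eq_norm_sq]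
      exact expect_comp_eval (α := fun _ ↦ ι) k fun i ↦ ‖z i‖ ^ 2
    · exact expect_inner_apply_of_ne hjk z hz
  calc 𝔼 σ : κ → ι, ‖𝔼 k, z (σ k)‖ ^ 2
      = 𝔼 j, 𝔼 k, 𝔼 σ : κ → ι, inner ℝ (z (σ j)) (z (σ k)) := by
        simp only [norm_expect_sq]
        rw [expect_comm]
        exact expect_congr rfl fun j _ ↦ expect_comm _ _ _
    _ = (𝔼 i, ‖z i‖ ^ 2) / Fintype.card κ := by
        simp only [cross, Fintype.expect_ite_eq, Fintype.expect_const]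
        rw [NNRat.smul_def, NNRat.cast_inv, NNRat.cast_natCast, inv_mul_eq_div]

end Variance

section Estimator

variable {ι κ E : Type*} [Fintype ι] [Fintype κ] [AddCommGroup E] [Module ℚ≥0 E]

/-- The SVRG estimator on a draw without refresh, for the minibatch of indices `σ`. The vectors
`u i` and `v i` stand for the gradients `∇fᵢ(y)` at the query point and `∇fᵢ(ȳ)` at the snapshot. -/
def svrgEstimator (u v : ι → E) (σ : κ → ι) : E :=
  𝔼 k, (u (σ k) - v (σ k)) + 𝔼 i, v i

variable [Nonempty κ]

lemma svrgEstimator_sub_expect (u v : ι → E) (σ : κ → ι) :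
    svrgEstimator u v σ - 𝔼 i, u i = 𝔼 k, Fintype.balance (u - v) (σ k) := by
  simp only [svrgEstimator, Fintype.balance_apply, Pi.sub_apply, expect_sub_distrib,
    Fintype.expect_const]
  abel

lemma expect_svrgEstimator [Nonempty ι] [DecidableEq κ] (u v : ι → E) :
    𝔼 σ : κ → ι, svrgEstimator u v σ = 𝔼 i, u i := by
  simp only [svrgEstimator, expect_add_distrib, Fintype.expect_const]
  rw [expect_expect_apply fun i ↦ u i - v i, expect_sub_distrib, sub_add_cancel]

end Estimator

section Growth

variable {ι κ E : Type*} [Fintype ι] [Nonempty ι] [Fintype κ] [Nonempty κ] [DecidableEq κ]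
  [SeminormedAddCommGroup E] [InnerProductSpace ℝ E] [Module ℚ≥0 E]

lemma expect_norm_sq_svrgEstimator_sub_le (u v w : ι → E) :
    𝔼 σ : κ → ι, ‖svrgEstimator u v σ - 𝔼 i, u i‖ ^ 2 ≤
      2 / Fintype.card κ * (𝔼 i, ‖u i - w i‖ ^ 2 + 𝔼 i, ‖v i - w i‖ ^ 2) :=
  calc 𝔼 σ : κ → ι, ‖svrgEstimator u v σ - 𝔼 i, u i‖ ^ 2
      = (𝔼 i, ‖Fintype.balance (u - v) i‖ ^ 2) / Fintype.card κ := by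
        simp only [svrgEstimator_sub_expect]
        exact expect_norm_sq_expect_apply (Fintype.expect_balance _)
    _ ≤ (𝔼 i, ‖u i - v i‖ ^ 2) / Fintype.card κ := by
        rw [expect_norm_sq_balance]
        gcongr
        exact sub_le_self _ (sq_nonneg _)
    _ ≤ (𝔼 i, 2 * (‖u i - w i‖ ^ 2 + ‖v i - w i‖ ^ 2)) / Fintype.card κ := by
        gcongr with i
        exact norm_sub_sq_le_two_mul _ _ _
    _ = 2 / Fintype.card κ * (𝔼 i, ‖u i - w i‖ ^ 2 + 𝔼 i, ‖v i - w i‖ ^ 2) := by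
        rw [← mul_expect, expect_add_distrib, mul_div_right_comm]

theorem svrg_growth_condition_general (u v w : ι → E) {p : ℝ} (hp : 1 ≤ p) :
    (1 / p) • 𝔼 i, u i + (1 - 1 / p) • 𝔼 σ : κ → ι, svrgEstimator u v σ = 𝔼 i, u i ∧
    1 / p * ‖𝔼 i, u i - 𝔼 i, u i‖ ^ 2
        + (1 - 1 / p) * 𝔼 σ : κ → ι, ‖svrgEstimator u v σ - 𝔼 i, u i‖ ^ 2 ≤
      2 * (1 - 1 / p) / (Fintype.card κ * Fintype.card ι) *
        (∑ i, ‖u i - w i‖ ^ 2 + ∑ i, ‖v i - w i‖ ^ 2) := by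
  refine ⟨by rw [expect_svrgEstimator]; module, ?_⟩
  have hq : 0 ≤ 1 - 1 / p := sub_nonneg.2 (div_le_one_of_le₀ hp (zero_le_one.trans hp))
  calc 1 / p * ‖𝔼 i, u i - 𝔼 i, u i‖ ^ 2
        + (1 - 1 / p) * 𝔼 σ : κ → ι, ‖svrgEstimator u v σ - 𝔼 i, u i‖ ^ 2
      = (1 - 1 / p) * 𝔼 σ : κ → ι, ‖svrgEstimator u v σ - 𝔼 i, u i‖ ^ 2 := by simp
    _ ≤ (1 - 1 / p) *
          (2 / Fintype.card κ * (𝔼 i, ‖u i - w i‖ ^ 2 + 𝔼 i, ‖v i - w i‖ ^ 2)) := by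
        gcongr
        exact expect_norm_sq_svrgEstimator_sub_le u v w
    _ = _ := by
        simp only [Fintype.expect_eq_sum_div_card]
        ring

end Growth

/-- **General growth condition for the SVRG gradient estimator.**
With `b` i.i.d. uniform indices and an independent Bernoulli refresh variable `I`
with success probability `1/p` (so that expectation is the corresponding mixture of
the uniform average over all `n^b` index tuples), the SVRG estimator
`∇̂f(y) = ∇f(y)` if `I = 1` and
`∇̂f(y) = (1/b) Σ_l (∇f_{j_l}(y) - ∇f_{j_l}(ȳ)) + ∇f(ȳ)` if `I = 0`
is unbiased and satisfies
`E‖∇̂f(y) - ∇f(y)‖² ≤ (2(1 - 1/p)/(bn)) [Σ_i ‖∇f_i(y) - ∇f_i(x⋆)‖²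
  + Σ_i ‖∇f_i(ȳ) - ∇f_i(x⋆)‖²]`. -/
theorem svrg_growth_condition
    {d : ℕ} (n : ℕ) (hn : 0 < n)
    (g : Fin n → EuclideanSpace ℝ (Fin d) → ℝ)
    (g' : Fin n → EuclideanSpace ℝ (Fin d) → EuclideanSpace ℝ (Fin d))
    (hgrad : ∀ i u, HasGradientAt (g i) (g' i u) u)
    (f : EuclideanSpace ℝ (Fin d) → ℝ)
    (hf : ∀ u, f u = (n : ℝ)⁻¹ * ∑ i, g i u)
    (p : ℝ) (hp : 1 ≤ p)
    (y ybar xstar : EuclideanSpace ℝ (Fin d))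
    (b : ℕ) (hb : 1 ≤ b) :
    (1 / p) • ((n : ℝ)⁻¹ • ∑ i, g' i y)
        + (1 - 1 / p) • (((n : ℝ) ^ b)⁻¹ • ∑ σ : Fin b → Fin n,
            ((b : ℝ)⁻¹ • (∑ l, (g' (σ l) y - g' (σ l) ybar))
              + (n : ℝ)⁻¹ • ∑ i, g' i ybar))
      = (n : ℝ)⁻¹ • ∑ i, g' i y ∧
    1 / p * ‖(n : ℝ)⁻¹ • (∑ i, g' i y) - (n : ℝ)⁻¹ • ∑ i, g' i y‖ ^ 2
        + (1 - 1 / p) * (((n : ℝ) ^ b)⁻¹ *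
            ∑ σ : Fin b → Fin n,
              ‖((b : ℝ)⁻¹ • (∑ l, (g' (σ l) y - g' (σ l) ybar))
                  + (n : ℝ)⁻¹ • ∑ i, g' i ybar) - (n : ℝ)⁻¹ • ∑ i, g' i y‖ ^ 2) ≤
      2 * (1 - 1 / p) / (b * n) *
        ((∑ i, ‖g' i y - g' i xstar‖ ^ 2) + ∑ i, ‖g' i ybar - g' i xstar‖ ^ 2) := by
  have : Nonempty (Fin n) := Fin.pos_iff_nonempty.1 hn
  have : Nonempty (Fin b) := Fin.pos_iff_nonempty.1 hb
  simpa only [svrgEstimator, expect_eq_inv_card_smul_sum ℝ, Fintype.card_fin,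
    Fintype.card_pi_const, Nat.cast_pow, smul_eq_mul] using
    svrg_growth_condition_general (κ := Fin b)
      (fun i ↦ g' i y) (fun i ↦ g' i ybar) (fun i ↦ g' i xstar) hp
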